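/- Let p be an odd prime for which 2 is a semiprimitive root modulo p, i.e., 2 has multiplicative order (p−1)/2 modulo p and the congruence 2^x ≡ −1 (mod p) has no solution. Let a ∈ {0,1,…,p−1} and j ∈ {0,1}. Then for every ε > 0 one has T^{(j)}_{p,a}(x) = x/(2p) + O(x^{α+ε}) as x → ∞, where α = ln p / ((p−1)·ln 2). (Upper-bound half of Theorem 3.) -/

import Mathlib

/-!
The parity of `s n` is detected by `(-1) ^ s n` and the residue class of `n` by the `p`-th roots of
unity, so `T p a j x - x / (2 p)` is, up to `O(1)`, an average over `z ^ p = 1` of the exponential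
sums `F z x = ∑_{n < x} (-1) ^ s n * z ^ n` (lemma `norm_residue_sum_le`).

Splitting `n` by its last binary digit gives `F z (2 N) = (1 - z) F (z²) N`; hence
`‖F z N‖ ≤ ∏_{i < k} ‖1 - z ^ (2 ^ i)‖ * ‖F (z ^ (2 ^ k)) (N / 2 ^ k)‖ + O_k(1)`.
Take `k = d = (p - 1) / 2`, the order of `2` modulo `p`, so that `z ^ (2 ^ d) = z`. Since `-1` is not
a power of `2` modulo `p`, the numbers `z ^ (± 2 ^ i)`, `i < d`, are exactly the primitive `p`-th
roots of unity. The product of `1 - μ` over these is `Φ_p(1) = p`, and inverses are complex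
conjugates, so the product above equals `√p` (lemma `prod_norm_sq`).
Iterating `‖F z N‖ ≤ √p ‖F z (N / 2 ^ d)‖ + O(1)` gives `‖F z N‖ = O(N ^ α)` for the exponent `α`
with `(2 ^ d) ^ α = √p`, which is `log p / ((p - 1) log 2)`. For `z = 1` the sum is bounded by `1`.
-/

/-- `s n` is the number of 1's in the binary expansion of `n`. -/
def s (n : ℕ) : ℕ := (Nat.digits 2 n).sum

/-- `T m a j x` counts natural numbers `n < x` with `n ≡ a (mod m)` and `s n ≡ j (mod 2)`. -/
def T (m a j x : ℕ) : ℕ :=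
  ((Finset.range x).filter (fun n => n % m = a ∧ s n % 2 = j)).card

open Finset

/-- The exponential sum `∑_{n < N} (-1) ^ s n * z ^ n`. -/
noncomputable def F (z : ℂ) (N : ℕ) : ℂ := ∑ n ∈ range N, (-1) ^ s n * z ^ n

lemma s_two_mul (n : ℕ) : s (2 * n) = s n := by
  rcases Nat.eq_zero_or_pos n with rfl | h
  · simp
  · unfold s
    rw [Nat.digits_def' (by norm_num) (by omega)]
    simp

lemma s_two_mul_add_one (n : ℕ) : s (2 * n + 1) = s n + 1 := by
  unfold s
  rw [Nat.digits_def' (by norm_num) (by omega)]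
  have h1 : (2 * n + 1) % 2 = 1 := by omega
  have h2 : (2 * n + 1) / 2 = n := by omega
  rw [h1, h2]
  simp [add_comm]

lemma F_two_mul (z : ℂ) (N : ℕ) : F z (2 * N) = (1 - z) * F (z ^ 2) N := by
  induction N with
  | zero => simp [F]
  | succ N ih =>
    have h : F z (2 * (N + 1)) = F z (2 * N) + (-1) ^ s (2 * N) * z ^ (2 * N)
        + (-1) ^ s (2 * N + 1) * z ^ (2 * N + 1) := by
      unfold F
      rw [show 2 * (N + 1) = 2 * N + 1 + 1 by ring, sum_range_succ, sum_range_succ]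
    have h' : F (z ^ 2) (N + 1) = F (z ^ 2) N + (-1) ^ s N * (z ^ 2) ^ N := by
      unfold F
      rw [sum_range_succ]
    rw [h, h', ih, s_two_mul, s_two_mul_add_one]
    ring

lemma norm_F_le (z : ℂ) (hz : ‖z‖ = 1) (N : ℕ) : ‖F z N‖ ≤ N := by
  unfold F
  refine (norm_sum_le _ _).trans ?_
  simp [hz]

lemma norm_F_step (z : ℂ) (hz : ‖z‖ = 1) (N : ℕ) :
    ‖F z N‖ ≤ ‖1 - z‖ * ‖F (z ^ 2) (N / 2)‖ + 1 := by
  rw [← norm_mul, ← F_two_mul]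
  rcases Nat.even_or_odd' N with ⟨m, rfl | rfl⟩
  · rw [show 2 * m / 2 = m by omega]
    linarith
  · rw [show (2 * m + 1) / 2 = m by omega]
    have : F z (2 * m + 1) = F z (2 * m) + (-1) ^ s (2 * m) * z ^ (2 * m) := by
      unfold F
      rw [sum_range_succ]
    rw [this]
    refine (norm_add_le _ _).trans ?_
    simp [hz]

lemma norm_F_iter (k : ℕ) : ∀ (z : ℂ) (_ : ‖z‖ = 1) (N : ℕ),
    ‖F z N‖ ≤ (∏ i ∈ range k, ‖1 - z ^ 2 ^ i‖) * ‖F (z ^ 2 ^ k) (N / 2 ^ k)‖ + (2 ^ k - 1) := by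
  induction k with
  | zero => intro z _ N; simp
  | succ k ih =>
    intro z hz N
    have h1 := norm_F_step z hz N
    have h2 := ih (z ^ 2) (by simp [hz]) (N / 2)
    have h3 : ‖1 - z‖ ≤ 2 := by
      refine (norm_sub_le _ _).trans ?_
      rw [hz]; norm_num
    have h4 : ∏ i ∈ range (k + 1), ‖1 - z ^ 2 ^ i‖
        = ‖1 - z‖ * ∏ i ∈ range k, ‖1 - (z ^ 2) ^ 2 ^ i‖ := by
      rw [prod_range_succ', mul_comm]
      simp only [← pow_mul, ← pow_succ', pow_zero, pow_one]
    have h5 : (z ^ 2) ^ 2 ^ k = z ^ 2 ^ (k + 1) := by rw [← pow_mul, pow_succ']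
    have h6 : N / 2 / 2 ^ k = N / 2 ^ (k + 1) := by rw [Nat.div_div_eq_div_mul, pow_succ']
    rw [h5, h6] at h2
    rw [h4]
    have h7 : (1 : ℝ) ≤ 2 ^ k := one_le_pow₀ (by norm_num)
    have h8 := mul_le_mul_of_nonneg_left h2 (norm_nonneg (1 - z))
    have h9 := mul_le_mul_of_nonneg_right h3 (sub_nonneg.2 h7)
    rw [pow_succ' (2 : ℝ)]
    linarith

lemma norm_F_one (N : ℕ) : ‖F 1 N‖ ≤ 1 := by
  simpa using norm_F_step 1 (by simp) N

/-- The numbers `z ^ (± 2 ^ i)` exhaust the primitive `p`-th roots of unity, and the two signs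
contribute equally, so the square of this product is `Φ_p(1) = p`. -/
lemma prod_norm_sq (p : ℕ) (hp : p.Prime) (hodd : Odd p)
    (hord : orderOf (2 : ZMod p) = (p - 1) / 2)
    (hneg : ¬ ∃ x : ℕ, (2 : ZMod p) ^ x = -1) (z : ℂ) (hz : IsPrimitiveRoot z p) :
    (∏ i ∈ range ((p - 1) / 2), ‖1 - z ^ 2 ^ i‖) ^ 2 = p := by
  have : Fact p.Prime := ⟨hp⟩
  have hp2 := hp.two_le
  obtain ⟨m, hm⟩ := hodd
  have hd : (p - 1) / 2 = m := by omega
  rw [hd] at hord ⊢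
  have hnorm : ‖z‖ = 1 := hz.norm'_eq_one hp.ne_zero
  have hz0 : z ≠ 0 := hz.ne_zero hp.ne_zero
  have hcop : ∀ i, Nat.Coprime (2 ^ i) p := fun i =>
    Nat.Coprime.pow_left i ((Nat.coprime_primes Nat.prime_two hp).2 (by omega))
  have key : ∀ i < m, ∀ k < m, z ^ 2 ^ i = z ^ 2 ^ k → i = k := by
    intro i hi k hk h
    have h1 := (hz.isOfFinOrder hp.ne_zero).pow_eq_pow_iff_modEq.1 h
    rw [← hz.eq_orderOf] at h1
    have h2 := (ZMod.natCast_eq_natCast_iff _ _ _).2 h1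
    push_cast at h2
    exact pow_injOn_Iio_orderOf (by simpa [hord] using hi) (by simpa [hord] using hk) h2
  have key2 : ∀ i k, z ^ 2 ^ i ≠ (z ^ 2 ^ k)⁻¹ := by
    intro i k h
    have h1 : z ^ (2 ^ i + 2 ^ k) = 1 := by
      rw [pow_add, h]
      exact inv_mul_cancel₀ (pow_ne_zero _ hz0)
    have h2 := (ZMod.natCast_eq_zero_iff _ _).2 ((hz.pow_eq_one_iff_dvd _).1 h1)
    push_cast at h2
    apply hneg
    -- multiply `2 ^ i = - 2 ^ k` by the inverse `2 ^ ((m - 1) * k)` of `2 ^ k`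
    refine ⟨i + (m - 1) * k, ?_⟩
    have h3 : (2 : ZMod p) ^ m = 1 := by rw [← hord]; exact pow_orderOf_eq_one _
    have h4 : (2 : ZMod p) ^ k * 2 ^ ((m - 1) * k) = 1 := by
      rw [← pow_add, show k + (m - 1) * k = m * k by
        obtain ⟨t, rfl⟩ : ∃ t, m = t + 1 := ⟨m - 1, by omega⟩
        simp; ring, pow_mul, h3, one_pow]
    rw [pow_add, eq_neg_of_add_eq_zero_left h2, neg_mul, h4]
  have hA : Set.InjOn (fun i => z ^ 2 ^ i) (range m : Set ℕ) := by
    intro i hi k hk h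
    exact key i (by simpa using hi) k (by simpa using hk) h
  have hB : Set.InjOn (fun i => (z ^ 2 ^ i)⁻¹) (range m : Set ℕ) := by
    intro i hi k hk h
    exact key i (by simpa using hi) k (by simpa using hk) (inv_injective h)
  have hdisj : Disjoint ((range m).image (fun i => z ^ 2 ^ i))
      ((range m).image (fun i => (z ^ 2 ^ i)⁻¹)) := by
    rw [Finset.disjoint_left]
    intro w hw hw'
    simp only [mem_image] at hw hw'
    obtain ⟨i, -, rfl⟩ := hw
    obtain ⟨k, -, hk⟩ := hw'
    exact key2 i k hk.symm
  have hU : (range m).image (fun i => z ^ 2 ^ i) ∪ (range m).image (fun i => (z ^ 2 ^ i)⁻¹)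
      = primitiveRoots p ℂ := by
    apply Finset.eq_of_subset_of_card_le
    · intro w hw
      rw [mem_primitiveRoots hp.pos]
      simp only [mem_union, mem_image] at hw
      rcases hw with ⟨i, -, rfl⟩ | ⟨i, -, rfl⟩
      · exact hz.pow_of_coprime _ (hcop i)
      · exact (hz.pow_of_coprime _ (hcop i)).inv
    · rw [card_union_of_disjoint hdisj, card_image_of_injOn hA, card_image_of_injOn hB,
        hz.card_primitiveRoots, Nat.totient_prime hp, card_range]
      omega
  have hcyc : ∏ μ ∈ primitiveRoots p ℂ, (1 - μ) = p := by
    have h := Polynomial.eval_one_cyclotomic_prime (R := ℂ) (p := p)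
    rw [Polynomial.cyclotomic_eq_prod_X_sub_primitiveRoots hz, Polynomial.eval_prod] at h
    simpa using h
  have hinv : ∀ i, ‖1 - (z ^ 2 ^ i)⁻¹‖ = ‖1 - z ^ 2 ^ i‖ := by
    intro i
    have h0 : z ^ 2 ^ i ≠ 0 := pow_ne_zero _ hz0
    have : 1 - (z ^ 2 ^ i)⁻¹ = -((z ^ 2 ^ i)⁻¹ * (1 - z ^ 2 ^ i)) := by
      field_simp; ring
    rw [this, norm_neg, norm_mul]
    simp [hnorm]
  have h := congrArg (fun w : ℂ => ‖w‖) hcyc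
  simp only [norm_prod] at h
  rw [← hU, prod_union hdisj, prod_image hA, prod_image hB] at h
  simp only [hinv] at h
  rw [sq, h]
  simp

/-- A recursion `g N ≤ P * g (N / q) + C` with `P > 1` forces `g N = O(N ^ α)`, where `q ^ α = P`. -/
lemma rec_bound (g : ℕ → ℝ) (q : ℕ) (hq : 2 ≤ q) (P C α : ℝ) (hP : 1 < P) (hC : 0 ≤ C)
    (hα : 0 ≤ α) (hqα : (q : ℝ) ^ α = P) (htriv : ∀ N : ℕ, g N ≤ N)
    (hrec : ∀ N, g N ≤ P * g (N / q) + C) :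
    ∃ A : ℝ, ∀ N : ℕ, 1 ≤ N → g N ≤ A * (N : ℝ) ^ α := by
  -- the bound with the constant `B` subtracted is what reproduces itself under the recursion
  set B : ℝ := C / (P - 1) with hB
  have hB0 : 0 ≤ B := div_nonneg hC (by linarith)
  have hBC : B * (P - 1) = C := div_mul_cancel₀ _ (by linarith)
  suffices h : ∀ N : ℕ, 1 ≤ N → g N ≤ (q + B) * (N : ℝ) ^ α - B from
    ⟨q + B, fun N hN => (h N hN).trans (by linarith)⟩
  intro N
  induction N using Nat.strong_induction_on with
  | _ N ih =>
    intro hN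
    have hN1 : (1 : ℝ) ≤ N := by exact_mod_cast hN
    have hq0 : (0 : ℝ) < q := by positivity
    by_cases hNq : N < q
    · have h1 : (1 : ℝ) ≤ (N : ℝ) ^ α := Real.one_le_rpow hN1 hα
      have h2 : (N : ℝ) ≤ q := by exact_mod_cast hNq.le
      have h3 := htriv N
      nlinarith
    · have h1 := ih (N / q) (Nat.div_lt_self (by omega) (by omega))
        (Nat.div_pos (by omega) (by omega))
      have h2 : ((N / q : ℕ) : ℝ) ^ α ≤ (N : ℝ) ^ α / P := by
        rw [← hqα, ← Real.div_rpow (by positivity) (by positivity)]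
        exact Real.rpow_le_rpow (by positivity) Nat.cast_div_le hα
      have h3 : P * ((N / q : ℕ) : ℝ) ^ α ≤ (N : ℝ) ^ α := by
        rw [le_div_iff₀ (by linarith)] at h2
        linarith
      have h4 := hrec N
      have h5 := mul_le_mul_of_nonneg_left h1 (show 0 ≤ P by linarith)
      have h6 := mul_le_mul_of_nonneg_left h3 (show 0 ≤ q + B by linarith)
      nlinarith

lemma F_bound (p : ℕ) (hp : p.Prime) (hodd : Odd p)
    (hord : orderOf (2 : ZMod p) = (p - 1) / 2)
    (hneg : ¬ ∃ x : ℕ, (2 : ZMod p) ^ x = -1) (z : ℂ) (hz : z ^ p = 1) :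
    ∃ A : ℝ, ∀ N : ℕ, 1 ≤ N →
      ‖F z N‖ ≤ A * (N : ℝ) ^ (Real.log p / ((p - 1) * Real.log 2)) := by
  have : Fact p.Prime := ⟨hp⟩
  have hp2 := hp.two_le
  have hp1 : (1 : ℝ) < p := by exact_mod_cast hp.one_lt
  have hlogp : 0 < Real.log p := Real.log_pos hp1
  have hlog2 : 0 < Real.log 2 := Real.log_pos (by norm_num)
  have hα : 0 ≤ Real.log p / ((p - 1) * Real.log 2) :=
    div_nonneg hlogp.le (mul_nonneg (by linarith) hlog2.le)
  by_cases hz1 : z = 1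
  · subst hz1
    refine ⟨1, fun N hN => (norm_F_one N).trans ?_⟩
    rw [one_mul]
    exact Real.one_le_rpow (by exact_mod_cast hN) hα
  · have hprim : IsPrimitiveRoot z p := by
      rw [← orderOf_eq_prime hz hz1]; exact IsPrimitiveRoot.orderOf z
    have hnorm : ‖z‖ = 1 := hprim.norm'_eq_one hp.ne_zero
    have hsq := prod_norm_sq p hp hodd hord hneg z hprim
    set d := (p - 1) / 2 with hd
    have hd2 : 2 * d + 1 = p := by obtain ⟨m, hm⟩ := hodd; omega
    have hd2' : (p : ℝ) - 1 = 2 * d := by rw [← hd2]; push_cast; ring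
    have hd0 : d ≠ 0 := by omega
    set P := ∏ i ∈ range d, ‖1 - z ^ 2 ^ i‖ with hPdef
    have hP0 : 0 ≤ P := prod_nonneg fun _ _ => norm_nonneg _
    have hP1 : 1 < P := by nlinarith
    have hcyc : z ^ 2 ^ d = z := by
      have h3 : (2 : ZMod p) ^ d = 1 := by rw [← hord]; exact pow_orderOf_eq_one _
      have h4 : 2 ^ d ≡ 1 [MOD p] := by
        rw [← ZMod.natCast_eq_natCast_iff]; push_cast; exact h3
      rw [hprim.eq_orderOf] at h4
      simpa using (hprim.isOfFinOrder hp.ne_zero).pow_eq_pow_iff_modEq.2 h4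
    refine rec_bound (fun N => ‖F z N‖) (2 ^ d) ?_ P (2 ^ d - 1) _ hP1 ?_ hα ?_
      (norm_F_le z hnorm) ?_
    · exact Nat.le_self_pow hd0 2
    · exact sub_nonneg.2 (one_le_pow₀ (by norm_num))
    · -- both sides have logarithm `log p / 2`
      have hlogP : 2 * Real.log P = Real.log p := by
        rw [← hsq, Real.log_pow]; norm_num
      push_cast
      rw [Real.rpow_def_of_pos (by positivity), Real.log_pow, hd2', ← hlogP]
      have : (d : ℝ) ≠ 0 := by exact_mod_cast hd0
      rw [show (d : ℝ) * Real.log 2 * (2 * Real.log P / (2 * d * Real.log 2)) = Real.log P by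
        field_simp]
      exact Real.exp_log (by linarith)
    · intro N
      have := norm_F_iter d z hnorm N
      rw [hcyc] at this
      exact this

/-- Orthogonality of the additive characters modulo `p`. -/
lemma norm_residue_sum_le (p : ℕ) (hp0 : p ≠ 0) (ζ : ℂ) (hζ : IsPrimitiveRoot ζ p)
    (a : ℕ) (ha : a < p) (x : ℕ) :
    |∑ n ∈ range x with n % p = a, (-1 : ℝ) ^ s n| ≤ ∑ l ∈ range p, ‖F (ζ ^ l) x‖ := by
  have hnorm : ‖ζ‖ = 1 := hζ.norm'_eq_one hp0
  -- the natural number `n + (p - a)` represents the class of `n - a`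
  have horth : ∀ n : ℕ, ∑ l ∈ range p, (ζ ^ l) ^ (n + (p - a)) = if n % p = a then (p : ℂ) else 0 := by
    intro n
    have hiff : p ∣ n + (p - a) ↔ n % p = a := by
      have h1 : n + (p - a) ≡ 0 [MOD p] ↔ n ≡ a [MOD p] := by
        constructor
        · intro h
          have h2 := h.add_right a
          rw [show n + (p - a) + a = n + p by omega, zero_add] at h2
          simpa [Nat.ModEq] using h2
        · intro h
          have h2 := h.add_right (p - a)
          rw [show a + (p - a) = p by omega] at h2
          exact h2.trans (by simp [Nat.ModEq])
      rw [← Nat.modEq_zero_iff_dvd, h1, Nat.ModEq, Nat.mod_eq_of_lt ha]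
    have hcomm : ∀ l, (ζ ^ l) ^ (n + (p - a)) = (ζ ^ (n + (p - a))) ^ l := fun l => by
      rw [← pow_mul, ← pow_mul, mul_comm]
    simp only [hcomm]
    split_ifs with h
    · rw [(hζ.pow_eq_one_iff_dvd _).2 (hiff.2 h)]
      simp
    · have hne : ζ ^ (n + (p - a)) ≠ 1 := fun h' =>
        h (hiff.1 ((hζ.pow_eq_one_iff_dvd _).1 h'))
      rw [geom_sum_eq hne, ← pow_mul, mul_comm, pow_mul, hζ.pow_eq_one]
      simp
  have hid : (p : ℂ) * ((∑ n ∈ range x with n % p = a, (-1 : ℝ) ^ s n : ℝ) : ℂ)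
      = ∑ l ∈ range p, (ζ ^ l) ^ (p - a) * F (ζ ^ l) x := by
    unfold F
    simp only [mul_sum]
    rw [sum_comm, Complex.ofReal_sum, mul_sum, sum_filter]
    refine sum_congr rfl fun n _ => ?_
    have : ∀ l, (ζ ^ l) ^ (p - a) * ((-1 : ℂ) ^ s n * (ζ ^ l) ^ n)
        = (-1 : ℂ) ^ s n * (ζ ^ l) ^ (n + (p - a)) := fun l => by
      rw [pow_add]; ring
    simp only [this, ← mul_sum, horth]
    split_ifs <;> simp [mul_comm]
  have h := congrArg (fun w : ℂ => ‖w‖) hid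
  simp only [norm_mul, Complex.norm_natCast, Complex.norm_real, Real.norm_eq_abs] at h
  have h2 : ‖∑ l ∈ range p, (ζ ^ l) ^ (p - a) * F (ζ ^ l) x‖ ≤ ∑ l ∈ range p, ‖F (ζ ^ l) x‖ := by
    refine (norm_sum_le _ _).trans (le_of_eq (sum_congr rfl fun l _ => ?_))
    simp [hnorm]
  have hp1 : (1 : ℝ) ≤ p := by exact_mod_cast Nat.one_le_iff_ne_zero.2 hp0
  rw [← h] at h2
  exact (le_mul_of_one_le_left (abs_nonneg _) hp1).trans h2

lemma abs_count_sub_le (p : ℕ) (hp0 : 0 < p) (a : ℕ) (ha : a < p) (x : ℕ) :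
    |(((range x).filter (fun n => n % p = a)).card : ℝ) - x / p| ≤ 1 := by
  have h1 : ((range x).filter (fun n => n % p = a)).card = x.count (· ≡ a [MOD p]) := by
    rw [Nat.count_eq_card_filter_range]
    congr 1
    ext n
    simp [Nat.ModEq, Nat.mod_eq_of_lt ha]
  have hpR : (0 : ℝ) < p := by exact_mod_cast hp0
  have hx : (x : ℝ) / p = (x / p : ℕ) + ((x % p : ℕ) : ℝ) / p := by
    have : (p : ℝ) * (x / p : ℕ) + (x % p : ℕ) = x := by exact_mod_cast Nat.div_add_mod x p
    field_simp
    linarith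
  have h3 : (0 : ℝ) ≤ ((x % p : ℕ) : ℝ) / p := by positivity
  have h4 : ((x % p : ℕ) : ℝ) / p ≤ 1 := by
    rw [div_le_one hpR]
    exact_mod_cast (Nat.mod_lt x hp0).le
  rw [h1, Nat.count_modEq_card _ hp0, hx, abs_le]
  push_cast
  split_ifs <;> constructor <;> linarith

lemma two_mul_T (p a j x : ℕ) (hj : j < 2) :
    2 * (T p a j x : ℝ) = ((range x).filter (fun n => n % p = a)).card
      + (-1) ^ j * ∑ n ∈ range x with n % p = a, (-1 : ℝ) ^ s n := by
  unfold T
  rw [← filter_filter, card_filter, card_eq_sum_ones, mul_sum]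
  push_cast
  rw [mul_sum, ← sum_add_distrib]
  refine sum_congr rfl fun n _ => ?_
  rw [← pow_add]
  rcases Nat.mod_two_eq_zero_or_one (s n) with h | h
  · interval_cases j
    · rw [Even.neg_one_pow (by rw [Nat.even_iff]; omega)]; simp [h]; norm_num
    · rw [Odd.neg_one_pow (by rw [Nat.odd_iff]; omega)]; simp [h]
  · interval_cases j
    · rw [Odd.neg_one_pow (by rw [Nat.odd_iff]; omega)]; simp [h]
    · rw [Even.neg_one_pow (by rw [Nat.even_iff]; omega)]; simp [h]; norm_num

/-- Upper-bound half of Theorem 3: if `p` is an odd prime for which `2` is a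
semiprimitive root (order `(p-1)/2` and `2^x ≡ -1 (mod p)` unsolvable), then
`T_{p,a}^{(j)}(x) = x/(2p) + O(x^{α+ε})` for every `ε > 0`, where
`α = ln p / ((p-1) ln 2)`. -/
theorem gelfond_exponent_semiprimitive_root_upper
    (p : ℕ) (hp : p.Prime) (hodd : Odd p)
    (hord : orderOf (2 : ZMod p) = (p - 1) / 2)
    (hneg : ¬ ∃ x : ℕ, (2 : ZMod p) ^ x = -1)
    (a : ℕ) (ha : a < p) (j : ℕ) (hj : j < 2)
    (ε : ℝ) (hε : 0 < ε) :
    (fun x : ℕ => (T p a j x : ℝ) - x / (2 * p))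
      =O[Filter.atTop] fun x : ℕ =>
        (x : ℝ) ^ (Real.log p / ((p - 1) * Real.log 2) + ε) := by
  have hp1 : (1 : ℝ) < p := by exact_mod_cast hp.one_lt
  have hα : 0 ≤ Real.log p / ((p - 1) * Real.log 2) :=
    div_nonneg (Real.log_pos hp1).le
      (mul_nonneg (by linarith) (Real.log_pos (by norm_num)).le)
  have hζ := Complex.isPrimitiveRoot_exp p hp.ne_zero
  set ζ := Complex.exp (2 * Real.pi * Complex.I / p)
  have hroot : ∀ l : ℕ, (ζ ^ l) ^ p = 1 := fun l => by
    rw [← pow_mul, mul_comm, pow_mul, hζ.pow_eq_one, one_pow]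
  choose A hA using fun l : ℕ => F_bound p hp hodd hord hneg (ζ ^ l) (hroot l)
  set α := Real.log p / ((p - 1) * Real.log 2)
  have hA0 : ∀ l, 0 ≤ A l := fun l => by
    simpa using (norm_nonneg _).trans (hA l 1 le_rfl)
  have hS0 : 0 ≤ ∑ l ∈ range p, A l := sum_nonneg fun l _ => hA0 l
  refine Asymptotics.IsBigO.of_bound (1 + ∑ l ∈ range p, A l) ?_
  filter_upwards [Filter.eventually_ge_atTop 1] with x hx
  have hx1 : (1 : ℝ) ≤ x := by exact_mod_cast hx
  have hF : ∑ l ∈ range p, ‖F (ζ ^ l) x‖ ≤ (∑ l ∈ range p, A l) * (x : ℝ) ^ α := by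
    rw [sum_mul]
    exact sum_le_sum fun l _ => hA l x hx
  have hS := (norm_residue_sum_le p hp.ne_zero ζ hζ a ha x).trans hF
  have hcount := abs_count_sub_le p hp.pos a ha x
  have hT := two_mul_T p a j x hj
  set S := ∑ n ∈ range x with n % p = a, (-1 : ℝ) ^ s n
  set c : ℝ := (((range x).filter (fun n => n % p = a)).card : ℝ)
  have hsplit : 2 * ((T p a j x : ℝ) - x / (2 * p)) = (c - x / p) + (-1) ^ j * S := by
    rw [mul_sub, hT]
    field_simp
    ring
  have hone : 1 ≤ (x : ℝ) ^ α := Real.one_le_rpow hx1 hα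
  have hmono : (x : ℝ) ^ α ≤ (x : ℝ) ^ (α + ε) :=
    Real.rpow_le_rpow_of_exponent_le hx1 (by linarith)
  have habs : 2 * |(T p a j x : ℝ) - x / (2 * p)| ≤ 1 + (∑ l ∈ range p, A l) * (x : ℝ) ^ α := by
    rw [← abs_two, ← abs_mul, abs_two, hsplit]
    refine (abs_add_le _ _).trans (add_le_add hcount ?_)
    rw [abs_mul, abs_pow, abs_neg, abs_one, one_pow, one_mul]
    exact hS
  have hpos : 0 ≤ (x : ℝ) ^ (α + ε) := by positivity
  rw [Real.norm_eq_abs, Real.norm_eq_abs, abs_of_nonneg hpos]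
  have h1 := mul_le_mul_of_nonneg_left hmono hS0
  have h2 := abs_nonneg ((T p a j x : ℝ) - x / (2 * p))
  linarith
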